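/- Let V > 0, σ > 0, μ ∈ ℝ, and let f(b) = (1/(√(2π)·σ·b))·exp(−(ln b − μ)²/(2σ²)) be the log-normal density on (0, ∞). Define F(b) = ∫₀ᵇ f(t) dt and s(b) = (V − b)·F(b). Then for every b > 0, the second derivative of s satisfies s''(b) = (f(b)/(b·σ²))·[(μ − σ² − ln b)(V − b) − 2σ²b]. -/

import Mathlib

/-!
Wherever `F' = f`, the product rule gives `((V - b) F)'' = (V - b) f' - 2 f`. For the log-normal
density `f`, completing the square in the exponent after absorbing the factor `1 / b = exp (-log b)`
shows that `f b` is its value at the mode `exp (μ - σ ^ 2)` times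
`exp (-(log b - (μ - σ ^ 2)) ^ 2 / (2 * σ ^ 2))`. Hence `f` is bounded on `(0, ∞)`, so that
`F b = ∫ t in 0..b, f t` is a genuine antiderivative, and
`f' b = f b / (b * σ ^ 2) * (μ - σ ^ 2 - log b)`.
-/

open MeasureTheory Set Topology

theorem hasDerivAt_deriv_const_sub_mul {𝕜 : Type*} [NontriviallyNormedField 𝕜] {F f : 𝕜 → 𝕜}
    {f' b : 𝕜} (V : 𝕜) (hF : ∀ᶠ x in 𝓝 b, HasDerivAt F (f x) x) (hf : HasDerivAt f f' b) :
    HasDerivAt (deriv fun x => (V - x) * F x) ((V - b) * f' - 2 * f b) b := by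
  have hsub (x : 𝕜) : HasDerivAt (fun y => V - y) (-1) x := (hasDerivAt_id' x).const_sub V
  have hfirst : (deriv fun x => (V - x) * F x) =ᶠ[𝓝 b] fun x => -1 * F x + (V - x) * f x :=
    hF.mono fun x hx => ((hsub x).fun_mul hx).deriv
  have hsecond := (hF.self_of_nhds.const_mul (-1)).fun_add ((hsub b).fun_mul hf)
  exact (hsecond.congr_of_eventuallyEq hfirst).congr_deriv (by ring)

theorem hasDerivAt_integral_of_continuousOn_Ioi {E : Type*} [NormedAddCommGroup E]
    [NormedSpace ℝ E] [CompleteSpace E] {f : ℝ → E} {a b : ℝ} (hab : a < b)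
    (hint : IntervalIntegrable f volume a b) (hcont : ContinuousOn f (Ioi a)) :
    HasDerivAt (fun x => ∫ t in a..x, f t) (f b) b :=
  intervalIntegral.integral_hasDerivAt_right hint
    (hcont.stronglyMeasurableAtFilter isOpen_Ioi b hab) (hcont.continuousAt (Ioi_mem_nhds hab))

/-- The expected surplus `(V - b) * F b` of a bid `b` on an item of value `V`, where
`F b = ∫ t in 0..b, f t` is the probability of winning for the density `f`; here `f` may be any
real function, with no normalization imposed. -/
noncomputable def expectedSurplus (V : ℝ) (f : ℝ → ℝ) (b : ℝ) : ℝ :=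
  (V - b) * ∫ t in (0 : ℝ)..b, f t

theorem hasDerivAt_deriv_expectedSurplus {f : ℝ → ℝ} {f' b : ℝ} (V : ℝ) (hb : 0 < b)
    (hint : ∀ x > 0, IntervalIntegrable f volume 0 x) (hcont : ContinuousOn f (Ioi 0))
    (hf : HasDerivAt f f' b) :
    HasDerivAt (deriv (expectedSurplus V f)) ((V - b) * f' - 2 * f b) b := by
  refine hasDerivAt_deriv_const_sub_mul V ?_ hf
  filter_upwards [Ioi_mem_nhds hb] with x hx
  exact hasDerivAt_integral_of_continuousOn_Ioi hx (hint x hx) hcont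

/-- The density at `x > 0` of `exp X`, for `X` normal with mean `μ` and standard deviation `σ > 0`.
Replacing `σ` by `-σ` changes its sign, and at `x < 0` it has a junk value, since
`Real.log x = Real.log |x|`. -/
noncomputable def logNormalPDFReal (μ σ x : ℝ) : ℝ :=
  1 / (Real.sqrt (2 * Real.pi) * σ * x) * Real.exp (-(Real.log x - μ) ^ 2 / (2 * σ ^ 2))

section LogNormal

variable {σ x : ℝ}

theorem logNormalPDFReal_eq_mode_mul_exp (μ : ℝ) (hσ : σ ≠ 0) (hx : 0 < x) :
    logNormalPDFReal μ σ x = logNormalPDFReal μ σ (Real.exp (μ - σ ^ 2)) *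
      Real.exp (-(Real.log x - (μ - σ ^ 2)) ^ 2 / (2 * σ ^ 2)) := by
  have absorb_inv {y : ℝ} (hy : 0 < y) : logNormalPDFReal μ σ y =
      1 / (Real.sqrt (2 * Real.pi) * σ) *
        Real.exp (-Real.log y + -(Real.log y - μ) ^ 2 / (2 * σ ^ 2)) := by
    rw [logNormalPDFReal, Real.exp_add, Real.exp_neg, Real.exp_log hy]
    field_simp
  rw [absorb_inv hx, absorb_inv (Real.exp_pos _), mul_assoc, ← Real.exp_add, Real.log_exp]
  congr 2
  field_simp
  ring

theorem abs_logNormalPDFReal_le_mode (μ : ℝ) (hσ : σ ≠ 0) (hx : 0 < x) :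
    |logNormalPDFReal μ σ x| ≤ |logNormalPDFReal μ σ (Real.exp (μ - σ ^ 2))| := by
  rw [logNormalPDFReal_eq_mode_mul_exp μ hσ hx, abs_mul, Real.abs_exp]
  refine mul_le_of_le_one_right (abs_nonneg _) (Real.exp_le_one_iff.mpr ?_)
  exact div_nonpos_of_nonpos_of_nonneg (neg_nonpos.mpr (sq_nonneg _)) (by positivity)

theorem hasDerivAt_logNormalPDFReal (μ : ℝ) (hσ : σ ≠ 0) (hx : 0 < x) :
    HasDerivAt (logNormalPDFReal μ σ)
      (logNormalPDFReal μ σ x / (x * σ ^ 2) * (μ - σ ^ 2 - Real.log x)) x := by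
  have hmode : logNormalPDFReal μ σ =ᶠ[𝓝 x] fun y =>
      logNormalPDFReal μ σ (Real.exp (μ - σ ^ 2)) *
        Real.exp (-(Real.log y - (μ - σ ^ 2)) ^ 2 / (2 * σ ^ 2)) := by
    filter_upwards [Ioi_mem_nhds hx] with y hy
    exact logNormalPDFReal_eq_mode_mul_exp μ hσ hy
  have hexponent : HasDerivAt (fun y => -(Real.log y - (μ - σ ^ 2)) ^ 2 / (2 * σ ^ 2))
      ((μ - σ ^ 2 - Real.log x) / (x * σ ^ 2)) x := by
    refine ((((Real.hasDerivAt_log hx.ne').sub_const (μ - σ ^ 2)).fun_pow 2).fun_neg.div_const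
      (2 * σ ^ 2)).congr_deriv ?_
    field_simp
    ring
  refine ((hexponent.exp.const_mul _).congr_of_eventuallyEq hmode).congr_deriv ?_
  rw [← mul_assoc, ← logNormalPDFReal_eq_mode_mul_exp μ hσ hx]
  ring

theorem continuousOn_logNormalPDFReal (μ : ℝ) (hσ : σ ≠ 0) :
    ContinuousOn (logNormalPDFReal μ σ) (Ioi 0) :=
  fun _ hx => (hasDerivAt_logNormalPDFReal μ hσ hx).continuousAt.continuousWithinAt

theorem intervalIntegrable_logNormalPDFReal (μ : ℝ) (hσ : σ ≠ 0) (hx : 0 ≤ x) :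
    IntervalIntegrable (logNormalPDFReal μ σ) volume 0 x := by
  rw [intervalIntegrable_iff_integrableOn_Ioc_of_le hx]
  have hmeas : AEStronglyMeasurable (logNormalPDFReal μ σ) (volume.restrict (Ioc 0 x)) :=
    ((continuousOn_logNormalPDFReal μ hσ).mono Ioc_subset_Ioi_self).aestronglyMeasurable
      measurableSet_Ioc
  refine IntegrableOn.of_bound measure_Ioc_lt_top hmeas
    |logNormalPDFReal μ σ (Real.exp (μ - σ ^ 2))| ?_
  filter_upwards [ae_restrict_mem measurableSet_Ioc] with t ht
  exact abs_logNormalPDFReal_le_mode μ hσ ht.1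

end LogNormal

theorem surplus_second_deriv_logNormal_general (V μ : ℝ) {σ b : ℝ} (hσ : σ ≠ 0) (hb : 0 < b) :
    HasDerivAt (deriv (expectedSurplus V (logNormalPDFReal μ σ)))
      (logNormalPDFReal μ σ b / (b * σ ^ 2) *
        ((μ - σ ^ 2 - Real.log b) * (V - b) - 2 * σ ^ 2 * b)) b := by
  refine (hasDerivAt_deriv_expectedSurplus V hb
    (fun x hx => intervalIntegrable_logNormalPDFReal μ hσ hx.le)
    (continuousOn_logNormalPDFReal μ hσ) (hasDerivAt_logNormalPDFReal μ hσ hb)).congr_deriv ?_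
  field_simp

/-- For the log-normal density, the second derivative of the
expected surplus satisfies
s''(b) = (f(b)/(bσ²)) · ((μ - σ² - ln b)(V - b) - 2σ²b) for all b > 0. -/
theorem surplus_second_deriv_logNormal (V σ μ : ℝ) (hV : 0 < V) (hσ : 0 < σ)
    (f F s : ℝ → ℝ)
    (hf : f = fun b =>
      1 / (Real.sqrt (2 * Real.pi) * σ * b) * Real.exp (-(Real.log b - μ) ^ 2 / (2 * σ ^ 2)))
    (hF : F = fun b => ∫ t in (0 : ℝ)..b, f t)
    (hs : s = fun b => (V - b) * F b) :
    ∀ b > 0, deriv (deriv s) b =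
      f b / (b * σ ^ 2) * ((μ - σ ^ 2 - Real.log b) * (V - b) - 2 * σ ^ 2 * b) := by
  subst hf hF hs
  exact fun b hb => (surplus_second_deriv_logNormal_general V μ hσ.ne' hb).deriv
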